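/- arXiv:2501.11215 — 2 statements merged into one kernel-verified Lean document; each statement's English description precedes it below -/
import Mathlib

section
/- For every integer n ≥ 1 there exists a connected combinatorial hypermap H_n with exactly n hyperedges (the hyper-ladder map) whose partial-dual Euler-genus polynomial is ∂ε_{H_n}(z) = 2·(1 + z²)^{n−1}. -/
open Classical

/-- A pre-hypermap on a set of flags `F`: three structure maps `θ₀, θ₁, θ₂`.
It is a genuine combinatorial hypermap when the three maps are
fixed-point-free involutions (see `PreHypermap.IsHypermap`). -/
structure PreHypermap (F : Type*) where
  theta : Fin 3 → F → F

namespace PreHypermap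

variable {F : Type*}

/-- `H` is a combinatorial hypermap: `θ₀, θ₁, θ₂` are fixed-point-free involutions. -/
def IsHypermap (H : PreHypermap F) : Prop :=
  ∀ i : Fin 3, Function.Involutive (H.theta i) ∧ ∀ x : F, H.theta i x ≠ x

/-- The equivalence relation on `F` generated by a set of functions `F → F`;
for a set of involutions, two flags are related iff they are in the same orbit
of the subgroup generated by those involutions. -/
def orbitRel (fs : Set (F → F)) : F → F → Prop :=
  Relation.EqvGen (fun x y => ∃ f ∈ fs, f x = y)

/-- The setoid of orbits of the subgroup generated by a set of involutions. -/
def orbitSetoid (fs : Set (F → F)) : Setoid F :=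
  Relation.EqvGen.setoid (fun x y => ∃ f ∈ fs, f x = y)

/-- The number of orbits on `F` of the subgroup generated by a set of involutions. -/
noncomputable def orbitCount (fs : Set (F → F)) : ℕ :=
  Nat.card (Quotient (orbitSetoid fs))

/-- `v H`: the number of vertices, i.e. orbits of `⟨θ₁, θ₂⟩`. -/
noncomputable def v (H : PreHypermap F) : ℕ := orbitCount {H.theta 1, H.theta 2}

/-- `e H`: the number of hyperedges, i.e. orbits of `⟨θ₀, θ₂⟩`. -/
noncomputable def e (H : PreHypermap F) : ℕ := orbitCount {H.theta 0, H.theta 2}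

/-- `f H`: the number of faces, i.e. orbits of `⟨θ₀, θ₁⟩`. -/
noncomputable def f (H : PreHypermap F) : ℕ := orbitCount {H.theta 0, H.theta 1}

/-- `c H`: the number of components, i.e. orbits of `⟨θ₀, θ₁, θ₂⟩`. -/
noncomputable def c (H : PreHypermap F) : ℕ :=
  orbitCount {H.theta 0, H.theta 1, H.theta 2}

/-- `H` is connected if it has exactly one component. -/
def Connected (H : PreHypermap F) : Prop := H.c = 1

/-- The Euler characteristic `χ(H) = v + e + f - |F|/2`. -/
noncomputable def chi (H : PreHypermap F) : ℤ :=
  (H.v : ℤ) + (H.e : ℤ) + (H.f : ℤ) - (Nat.card F : ℤ) / 2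

/-- The Euler genus `ε(H) = 2 c(H) - χ(H)`. -/
noncomputable def eulerGenus (H : PreHypermap F) : ℤ := 2 * (H.c : ℤ) - H.chi

/-- `H` is orientable: there is `o : F → {+1, -1}` with `o (θᵢ x) = - o x` for all `i, x`. -/
def Orientable (H : PreHypermap F) : Prop :=
  ∃ o : F → ℤ, (∀ x : F, o x = 1 ∨ o x = -1) ∧
    ∀ (i : Fin 3) (x : F), o (H.theta i x) = - o x

/-- The set `E(H)` of hyperedges of `H`, each hyperedge being its set of flags
(an orbit of `⟨θ₀, θ₂⟩`). -/
def edges (H : PreHypermap F) : Set (Set F) :=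
  {s : Set F | ∃ x : F, s = {y : F | orbitRel {H.theta 0, H.theta 2} x y}}

/-- The geometric dual `H* = (F, θ₂, θ₁, θ₀)`. -/
def dual (H : PreHypermap F) : PreHypermap F where
  theta := fun i => H.theta (2 - i)

/-- The partial dual of `H` with respect to a set `S` of flags (interchange `θ₀` and
`θ₂` on `S`); for `A ⊆ E(H)` the partial dual `H^A` is `H.pdual (⋃₀ A)`. -/
noncomputable def pdual (H : PreHypermap F) (S : Set F) : PreHypermap F where
  theta := fun i x =>
    if i = 1 then H.theta 1 x
    else if x ∈ S then H.theta (2 - i) x else H.theta i x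

/-- `f(A)` for `A ⊆ E(H)`: the number of orbits of `⟨θ₁, θ₂^A⟩` (which equals `v(H^A)`). -/
noncomputable def subf (H : PreHypermap F) (A : Set (Set F)) : ℕ :=
  (H.pdual (⋃₀ A)).v

/-- `c(A)` for `A ⊆ E(H)`: the number of orbits of the subgroup generated by `θ₁`, `θ₂`
and the permutation equal to `θ₀` on `S(A)` and the identity elsewhere. -/
noncomputable def subc (H : PreHypermap F) (A : Set (Set F)) : ℕ :=
  orbitCount {H.theta 1, H.theta 2, fun x => if x ∈ ⋃₀ A then H.theta 0 x else x}

/-- `χ(A) = v(A) + e(A) + f(A) - |S(A)|/2` for `A ⊆ E(H)`, where `v(A) = v(H)`,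
`e(A) = |A|`, `f(A) = v(H^A)` and `S(A) = ⋃₀ A`. -/
noncomputable def subchi (H : PreHypermap F) (A : Set (Set F)) : ℤ :=
  (H.v : ℤ) + (A.ncard : ℤ) + (H.subf A : ℤ) - ((⋃₀ A).ncard : ℤ) / 2

/-- `ε(A) = 2 c(A) - χ(A)` for `A ⊆ E(H)`. -/
noncomputable def subeps (H : PreHypermap F) (A : Set (Set F)) : ℤ :=
  2 * (H.subc A : ℤ) - H.subchi A

/-- The hyperedge set of `H` as a finset. -/
noncomputable def edgeFinset (H : PreHypermap F) [Fintype F] : Finset (Set F) :=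
  (Set.toFinite H.edges).toFinset

/-- The partial-dual Euler-genus polynomial `∂ε_H(z) = Σ_{A ⊆ E(H)} z^(ε(H^A))`. -/
noncomputable def pdPoly (H : PreHypermap F) [Fintype F] : Polynomial ℕ :=
  ∑ A ∈ H.edgeFinset.powerset,
    Polynomial.X ^ ((H.pdual (⋃₀ (A : Set (Set F)))).eulerGenus).toNat

/-- The partial-dual orientable-genus polynomial `∂Γ_H(z) = Σ_{A ⊆ E(H)} z^(ε(H^A)/2)`. -/
noncomputable def pdGammaPoly (H : PreHypermap F) [Fintype F] : Polynomial ℕ :=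
  ∑ A ∈ H.edgeFinset.powerset,
    Polynomial.X ^ (((H.pdual (⋃₀ (A : Set (Set F)))).eulerGenus) / 2).toNat

/-- The join `H₁ ∨ H₂` of two hypermaps on disjoint flag sets, joining the corner
`{x, θ₁ x}` of `H₁` to the corner `{y, θ₁′ y}` of `H₂`. -/
noncomputable def join {F₁ F₂ : Type*} (H₁ : PreHypermap F₁) (H₂ : PreHypermap F₂)
    (x : F₁) (y : F₂) : PreHypermap (F₁ ⊕ F₂) where
  theta := fun i z =>
    if i = 1 then
      if z = Sum.inl x then Sum.inr y
      else if z = Sum.inr y then Sum.inl x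
      else if z = Sum.inl (H₁.theta 1 x) then Sum.inr (H₂.theta 1 y)
      else if z = Sum.inr (H₂.theta 1 y) then Sum.inl (H₁.theta 1 x)
      else Sum.map (H₁.theta 1) (H₂.theta 1) z
    else Sum.map (H₁.theta i) (H₂.theta i) z

/-- The bar-amalgamation `H₁ ⊕ H₂` of two hypermaps on disjoint flag sets, with a new
connecting hyperedge `{p, q, p', q'} = Fin 4` meeting the corner `{x, θ₁ x}` of `H₁`
and the corner `{y, θ₁′ y}` of `H₂`. -/
noncomputable def bar {F₁ F₂ : Type*} (H₁ : PreHypermap F₁) (H₂ : PreHypermap F₂)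
    (x : F₁) (y : F₂) : PreHypermap ((F₁ ⊕ F₂) ⊕ Fin 4) where
  theta := fun i z =>
    if i = 0 then
      match z with
      | .inl (.inl a) => .inl (.inl (H₁.theta 0 a))
      | .inl (.inr b) => .inl (.inr (H₂.theta 0 b))
      | .inr k => .inr (Equiv.swap (0 : Fin 4) 2 (Equiv.swap (1 : Fin 4) 3 k))
    else if i = 2 then
      match z with
      | .inl (.inl a) => .inl (.inl (H₁.theta 2 a))
      | .inl (.inr b) => .inl (.inr (H₂.theta 2 b))
      | .inr k => .inr (Equiv.swap (0 : Fin 4) 1 (Equiv.swap (2 : Fin 4) 3 k))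
    else
      if z = .inl (.inl x) then .inr 0
      else if z = .inr 0 then .inl (.inl x)
      else if z = .inl (.inl (H₁.theta 1 x)) then .inr 1
      else if z = .inr 1 then .inl (.inl (H₁.theta 1 x))
      else if z = .inl (.inr y) then .inr 2
      else if z = .inr 2 then .inl (.inr y)
      else if z = .inl (.inr (H₂.theta 1 y)) then .inr 3
      else if z = .inr 3 then .inl (.inr (H₂.theta 1 y))
      else
        match z with
        | .inl (.inl a) => .inl (.inl (H₁.theta 1 a))
        | .inl (.inr b) => .inl (.inr (H₂.theta 1 b))
        | .inr k => .inr k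

end PreHypermap

/-!
Hyper-ladders are grown one hyperedge at a time. Adding a rung inserts four flags into an existing
hyperedge and glues a new hyperedge, a square, to them. This leaves `c` and the Euler characteristic
unchanged (`v`, `e`, `f`, `|F|/2` grow by `1, 1, 2, 4`), whereas adding the partial dual of the
square lowers the Euler characteristic by two (they grow by `0, 1, 1, 4`). Partial duality at a
union of hyperedges that misses the extended one commutes with the construction, and complementary
unions give dual hypermaps, of equal Euler genus. So each partial dual of the old map extends in
two ways, one of the same Euler genus and one of Euler genus two more: the polynomial is multiplied
by `1 + z²`.
-/

namespace PreHypermap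

section Orbits

variable {F R K T : Type*} {fs : Set (F → F)} {fs' : Set (F ⊕ R → F ⊕ R)}

/-- The orbit of a flag, as a point of the orbit space whose cardinality is `orbitCount fs`. -/
def orbitMk (fs : Set (F → F)) (x : F) : Quotient (orbitSetoid fs) :=
  Quotient.mk _ x

theorem orbitMk_eq_orbitMk_iff {x y : F} : orbitMk fs x = orbitMk fs y ↔ orbitRel fs x y :=
  Quotient.eq

theorem orbitMk_apply {f : F → F} (hf : f ∈ fs) (x : F) : orbitMk fs (f x) = orbitMk fs x :=
  (orbitMk_eq_orbitMk_iff.2 (.rel _ _ ⟨f, hf, rfl⟩)).symm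

theorem eq_of_orbitRel {g : F → T} (hg : ∀ f ∈ fs, ∀ x, g (f x) = g x) {x y : F}
    (h : orbitRel fs x y) : g x = g y := by
  induction h with
  | rel x y h =>
    obtain ⟨f, hf, rfl⟩ := h
    exact (hg f hf x).symm
  | refl x => rfl
  | symm x y _ ih => exact ih.symm
  | trans x y z _ _ ihxy ihyz => exact ihxy.trans ihyz

theorem orbitCount_eq_card_of_section (g : F → T) (s : T → F)
    (hg : ∀ f ∈ fs, ∀ x, g (f x) = g x) (hgs : Function.LeftInverse g s)
    (hs : ∀ x, orbitMk fs (s (g x)) = orbitMk fs x) : orbitCount fs = Nat.card T := by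
  have hker : orbitSetoid fs = Setoid.ker g := by
    refine Setoid.ext fun x y => ⟨eq_of_orbitRel hg, fun hxy => ?_⟩
    exact Quotient.eq.1 ((hs x).symm.trans ((congrArg (orbitMk fs ∘ s) hxy).trans (hs y)))
  rw [orbitCount, hker]
  exact Nat.card_congr (Setoid.quotientKerEquivOfSurjective g hgs.surjective)

/-- The labelling of the orbits on an extension `F ⊕ R` of the flag set in which a new flag `r`
either lies in the orbit of the old flag `x` (`label r = none`) or in the new orbit
`k` (`label r = some k`). -/
def orbitLabel (fs : Set (F → F)) (x : F) (label : R → Option K) :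
    F ⊕ R → Quotient (orbitSetoid fs) ⊕ K :=
  Sum.elim (fun y => .inl (orbitMk fs y)) fun r => (label r).elim (.inl (orbitMk fs x)) .inr

theorem orbitCount_sum_eq_add_card [Finite F] [Finite K] (x : F) (label : R → Option K)
    (rep : K → R) (hrep : ∀ k, label (rep k) = some k)
    (hinv : ∀ f ∈ fs', ∀ z, orbitLabel fs x label (f z) = orbitLabel fs x label z)
    (hold : ∀ f ∈ fs, ∀ y, orbitMk fs' (.inl (f y)) = orbitMk fs' (.inl y))
    (hnew : ∀ r, orbitMk fs' ((label r).elim (.inl x) (.inr ∘ rep)) = orbitMk fs' (.inr r)) :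
    orbitCount fs' = orbitCount fs + Nat.card K := by
  have hout (y : F) : orbitMk fs' (.inl (orbitMk fs y).out) = orbitMk fs' (.inl y) :=
    eq_of_orbitRel (g := orbitMk fs' ∘ Sum.inl) hold (Quotient.mk_out (s := orbitSetoid fs) y)
  rw [orbitCount, orbitCount, ← Nat.card_sum]
  refine orbitCount_eq_card_of_section (orbitLabel fs x label)
    (Sum.elim (fun q => .inl q.out) (.inr ∘ rep)) hinv ?_ ?_
  · rintro (q | k)
    · exact congrArg Sum.inl q.out_eq
    · simp [orbitLabel, hrep]
  · rintro (y | r)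
    · exact hout y
    · rw [← hnew r]
      cases h : label r with
      | none => simpa [orbitLabel, h] using hout x
      | some k => simp [orbitLabel, h]

theorem orbitCount_eq_one [Nonempty F] (h : ∀ x y, orbitMk fs x = orbitMk fs y) :
    orbitCount fs = 1 :=
  (orbitCount_eq_card_of_section (T := Unit) (fun _ => ()) (fun _ => Classical.arbitrary F)
    (fun _ _ _ => rfl) (fun _ => rfl) fun _ => h _ _).trans Nat.card_unique

end Orbits

section PartialDual

variable {F : Type*} (H : PreHypermap F) (S : Set F)

theorem eulerGenus_dual : H.dual.eulerGenus = H.eulerGenus := by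
  have hv : H.dual.v = H.f := congrArg orbitCount (Set.pair_comm _ _)
  have he : H.dual.e = H.e := congrArg orbitCount (Set.pair_comm _ _)
  have hf : H.dual.f = H.v := congrArg orbitCount (Set.pair_comm _ _)
  have hc : H.dual.c = H.c := congrArg orbitCount (by
    change ({H.theta 2, H.theta 1, H.theta 0} : Set (F → F)) = {H.theta 0, H.theta 1, H.theta 2}
    grind)
  rw [eulerGenus, eulerGenus, chi, chi, hv, he, hf, hc]
  ring

theorem pdual_compl : H.pdual Sᶜ = (H.pdual S).dual := by
  rw [dual, pdual, pdual]
  congr 1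
  funext i x
  by_cases hx : x ∈ S <;> fin_cases i <;> simp [hx]

theorem eulerGenus_pdual_compl : (H.pdual Sᶜ).eulerGenus = (H.pdual S).eulerGenus := by
  rw [pdual_compl, eulerGenus_dual]

/-- `S` is a union of hyperedges of `H`. -/
def EdgeClosed : Prop :=
  ∀ x, (H.theta 0 x ∈ S ↔ x ∈ S) ∧ (H.theta 2 x ∈ S ↔ x ∈ S)

variable {H S}

theorem EdgeClosed.compl (hS : H.EdgeClosed S) : H.EdgeClosed Sᶜ :=
  fun x => ⟨not_congr (hS x).1, not_congr (hS x).2⟩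

theorem EdgeClosed.mem_iff_of_orbitRel (hS : H.EdgeClosed S) {x y : F}
    (h : orbitRel {H.theta 0, H.theta 2} x y) : x ∈ S ↔ y ∈ S := by
  refine iff_of_eq (eq_of_orbitRel (g := (· ∈ S)) ?_ h)
  rintro f (rfl | rfl) z
  · exact propext (hS z).1
  · exact propext (hS z).2

theorem edgeClosed_of_mem_edges {s : Set F} (hs : s ∈ H.edges) : H.EdgeClosed s := by
  obtain ⟨x, rfl⟩ := hs
  intro y
  simp only [Set.mem_ofPred_eq, ← orbitMk_eq_orbitMk_iff]
  exact ⟨by rw [orbitMk_apply (by simp)], by rw [orbitMk_apply (by simp)]⟩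

theorem edgeClosed_sUnion {A : Set (Set F)} (hA : A ⊆ H.edges) : H.EdgeClosed (⋃₀ A) := by
  intro x
  simp only [Set.mem_sUnion]
  constructor <;> refine exists_congr fun s => and_congr_right fun hs => ?_
  · exact (edgeClosed_of_mem_edges (hA hs) x).1
  · exact (edgeClosed_of_mem_edges (hA hs) x).2

theorem subset_of_mem_edges {s : Set F} (hs : s ∈ H.edges) (hS : H.EdgeClosed S) {x : F}
    (hxs : x ∈ s) (hxS : x ∈ S) : s ⊆ S := by
  obtain ⟨z, rfl⟩ := hs
  exact fun y hy => (hS.mem_iff_of_orbitRel hy).1 ((hS.mem_iff_of_orbitRel hxs).2 hxS)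

theorem exists_mem_edges (x : F) : ∃ s ∈ H.edges, x ∈ s :=
  ⟨_, ⟨x, rfl⟩, .refl x⟩

theorem nonempty_of_mem_edges {s : Set F} (hs : s ∈ H.edges) : s.Nonempty := by
  obtain ⟨x, rfl⟩ := hs
  exact ⟨x, .refl x⟩

theorem sUnion_edges_subset (hS : H.EdgeClosed S) : ⋃₀ {s ∈ H.edges | s ⊆ S} = S := by
  refine (Set.sUnion_subset fun s hs => hs.2).antisymm fun x hx => ?_
  obtain ⟨s, hs, hxs⟩ := exists_mem_edges (H := H) x
  exact ⟨s, ⟨hs, subset_of_mem_edges hs hS hxs hx⟩, hxs⟩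

theorem mem_of_subset_sUnion {A : Set (Set F)} (hA : A ⊆ H.edges) {s : Set F}
    (hs : s ∈ H.edges) (hsA : s ⊆ ⋃₀ A) : s ∈ A := by
  obtain ⟨x, hxs⟩ := nonempty_of_mem_edges hs
  obtain ⟨a, ha, hxa⟩ := hsA hxs
  have hsa := subset_of_mem_edges hs (edgeClosed_of_mem_edges (hA ha)) hxs hxa
  have has := subset_of_mem_edges (hA ha) (edgeClosed_of_mem_edges hs) hxa hxs
  exact hsa.antisymm has ▸ ha

theorem pdPoly_eq_sum_edgeClosed [Fintype F] (H : PreHypermap F) :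
    H.pdPoly = ∑ S with H.EdgeClosed S, Polynomial.X ^ (H.pdual S).eulerGenus.toNat := by
  have hmem (s : Set F) : s ∈ H.edgeFinset ↔ s ∈ H.edges := Set.Finite.mem_toFinset _
  have hsub {A : Finset (Set F)} (hA : A ∈ H.edgeFinset.powerset) : (A : Set (Set F)) ⊆ H.edges :=
    fun s hs => (hmem s).1 (Finset.mem_powerset.1 hA hs)
  refine Finset.sum_nbij' (fun A => ⋃₀ (A : Set (Set F))) (fun S => {s ∈ H.edgeFinset | s ⊆ S})
    ?_ ?_ ?_ ?_ fun _ _ => rfl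
  · exact fun A hA => by simpa using edgeClosed_sUnion (hsub hA)
  · exact fun S _ => Finset.mem_powerset.2 (Finset.filter_subset _ _)
  · intro A hA
    ext s
    rw [Finset.mem_filter, hmem]
    exact ⟨fun hs => mem_of_subset_sUnion (hsub hA) hs.1 hs.2,
      fun hs => ⟨hsub hA hs, Set.subset_sUnion_of_mem hs⟩⟩
  · intro S hS
    simpa [hmem] using sUnion_edges_subset (Finset.mem_filter.1 hS).2

end PartialDual

section Rung

variable {F : Type*} (H : PreHypermap F) (x : F) (t : Bool)

/-- The hypermap obtained from `H` by adding a rung at the flag `x`. The new flags are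
`(c, u, w) : Bool × Bool × Bool`: those with `c = true` are inserted into the hyperedge of `x`,
as a path `x, (u, w) = (0, 0), (0, 1), (1, 1), (1, 0), θ₂ x` whose steps are alternately `θ₂`
and `θ₀`, and those with `c = false` form a new hyperedge, a square glued along `θ₁` to that path.
The Boolean `t` tells whether the new hyperedge is replaced by its partial dual. -/
noncomputable def addRung : PreHypermap (F ⊕ Bool × Bool × Bool) where
  theta := ![
    Sum.map (H.theta 0) fun (c, u, w) => if c || !t then (c, u, !w) else (c, !u, w),
    Sum.map (H.theta 1) fun (c, u, w) => (!c, u, w),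
    Sum.elim
      (fun y => if y = x then .inr (true, false, false)
        else if y = H.theta 2 x then .inr (true, true, false) else .inl (H.theta 2 y))
      fun
        | (true, u, true) => .inr (true, !u, true)
        | (true, u, false) => .inl (if u then H.theta 2 x else x)
        | (false, u, w) => .inr (if t then (false, u, !w) else (false, !u, w))]

@[simp]
theorem addRung_theta_zero_inl (y : F) : (H.addRung x t).theta 0 (.inl y) = .inl (H.theta 0 y) :=
  rfl

@[simp]
theorem addRung_theta_zero_inr (c u w : Bool) : (H.addRung x t).theta 0 (.inr (c, u, w)) =
    .inr (if c || !t then (c, u, !w) else (c, !u, w)) :=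
  rfl

@[simp]
theorem addRung_theta_one_inl (y : F) : (H.addRung x t).theta 1 (.inl y) = .inl (H.theta 1 y) :=
  rfl

@[simp]
theorem addRung_theta_one_inr (c u w : Bool) :
    (H.addRung x t).theta 1 (.inr (c, u, w)) = .inr (!c, u, w) :=
  rfl

theorem addRung_theta_two_inl (y : F) : (H.addRung x t).theta 2 (.inl y) =
    if y = x then .inr (true, false, false)
    else if y = H.theta 2 x then .inr (true, true, false) else .inl (H.theta 2 y) :=
  rfl

@[simp]
theorem addRung_theta_two_center_true (u : Bool) :
    (H.addRung x t).theta 2 (.inr (true, u, true)) = .inr (true, !u, true) :=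
  rfl

@[simp]
theorem addRung_theta_two_center_false (u : Bool) :
    (H.addRung x t).theta 2 (.inr (true, u, false)) = .inl (if u then H.theta 2 x else x) :=
  rfl

@[simp]
theorem addRung_theta_two_leaf (u w : Bool) : (H.addRung x t).theta 2 (.inr (false, u, w)) =
    .inr (if t then (false, u, !w) else (false, !u, w)) :=
  rfl

variable {H x}

theorem addRung_theta_two_involutive (h2 : Function.Involutive (H.theta 2))
    (hx : H.theta 2 x ≠ x) : Function.Involutive ((H.addRung x t).theta 2) := by
  rintro (y | ⟨c, u, w⟩)
  · rw [addRung_theta_two_inl]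
    split_ifs with hyx hyx'
    · simp [hyx]
    · simp [hyx']
    · have hne : H.theta 2 y ≠ x := fun h => hyx' (h ▸ (h2 y).symm)
      rw [addRung_theta_two_inl, if_neg hne, if_neg (h2.injective.ne hyx), h2 y]
  · cases c <;> cases t <;> cases u <;> cases w <;> simp [addRung_theta_two_inl, hx]

theorem isHypermap_addRung (hH : H.IsHypermap) : (H.addRung x t).IsHypermap := by
  intro i
  fin_cases i
  · refine ⟨?_, ?_⟩ <;> rintro (y | ⟨c, u, w⟩)
    · simp [(hH 0).1 y]
    · cases c <;> cases t <;> simp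
    · simpa using (hH 0).2 y
    · cases c <;> cases t <;> simp
  · refine ⟨?_, ?_⟩ <;> rintro (y | ⟨c, u, w⟩)
    · simp [(hH 1).1 y]
    · simp
    · simpa using (hH 1).2 y
    · simp
  · refine ⟨addRung_theta_two_involutive t (hH 2).1 ((hH 2).2 x), ?_⟩
    rintro (y | ⟨c, u, w⟩)
    · have hy := (hH 2).2 y
      change (H.addRung x t).theta 2 (.inl y) ≠ .inl y
      rw [addRung_theta_two_inl]
      split_ifs <;> simp [hy]
    · cases c <;> cases t <;> cases w <;> simp

variable {K : Type*} {fs : Set (F → F)}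
  {fs' : Set (F ⊕ Bool × Bool × Bool → F ⊕ Bool × Bool × Bool)}

theorem orbitMk_addRung_inl_theta_two (h2 : (H.addRung x t).theta 2 ∈ fs')
    (hx : H.theta 2 (H.theta 2 x) = x)
    (hends : orbitMk fs' (.inr (true, false, false)) = orbitMk fs' (.inr (true, true, false)))
    (y : F) : orbitMk fs' (.inl (H.theta 2 y)) = orbitMk fs' (.inl y) := by
  have hstart : orbitMk fs' (.inl x) = orbitMk fs' (.inr (true, false, false)) :=
    orbitMk_apply h2 (.inr (true, false, false))
  have hend : orbitMk fs' (.inl (H.theta 2 x)) = orbitMk fs' (.inr (true, true, false)) :=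
    orbitMk_apply h2 (.inr (true, true, false))
  have hjoin := hstart.trans (hends.trans hend.symm)
  by_cases hyx : y = x
  · rw [hyx, hjoin]
  by_cases hyx' : y = H.theta 2 x
  · rw [hyx', hx, hjoin]
  · have hy := orbitMk_apply h2 (.inl y)
    rwa [addRung_theta_two_inl, if_neg hyx, if_neg hyx'] at hy

theorem orbitLabel_addRung_theta_two (h2 : H.theta 2 ∈ fs) (label : Bool × Bool × Bool → Option K)
    (hends : ∀ u, label (true, u, false) = none)
    (hmid : label (true, false, true) = label (true, true, true))
    (hleaf : ∀ u w, label (if t then (false, u, !w) else (false, !u, w)) = label (false, u, w))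
    (z : F ⊕ Bool × Bool × Bool) :
    orbitLabel fs x label ((H.addRung x t).theta 2 z) = orbitLabel fs x label z := by
  have hmk := orbitMk_apply h2
  rcases z with y | ⟨_ | _, u, w⟩
  · rw [addRung_theta_two_inl]
    split_ifs <;> simp_all [orbitLabel]
  · rw [addRung_theta_two_leaf, orbitLabel, Sum.elim_inr, Sum.elim_inr, hleaf]
  · cases u <;> cases w <;> simp [orbitLabel, hends, hmid, hmk]

theorem orbitLabel_addRung_theta_zero (h0 : H.theta 0 ∈ fs)
    (label : Bool × Bool × Bool → Option K)
    (hlabel : ∀ c u w, label (if c || !t then (c, u, !w) else (c, !u, w)) = label (c, u, w))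
    (z : F ⊕ Bool × Bool × Bool) :
    orbitLabel fs x label ((H.addRung x t).theta 0 z) = orbitLabel fs x label z := by
  rcases z with y | ⟨c, u, w⟩
  · exact congrArg Sum.inl (orbitMk_apply h0 y)
  · rw [addRung_theta_zero_inr, orbitLabel, Sum.elim_inr, Sum.elim_inr, hlabel]

theorem orbitLabel_addRung_theta_one (h1 : H.theta 1 ∈ fs) (label : Bool × Bool → Option K)
    (z : F ⊕ Bool × Bool × Bool) :
    orbitLabel fs x (fun r => label r.2) ((H.addRung x t).theta 1 z) =
      orbitLabel fs x (fun r => label r.2) z := by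
  rcases z with y | r
  · exact congrArg Sum.inl (orbitMk_apply h1 y)
  · rfl

theorem orbitMk_addRung_inr_eq_center (h1 : (H.addRung x t).theta 1 ∈ fs') :
    ∀ (c u w : Bool), orbitMk fs' (.inr (c, u, w)) = orbitMk fs' (.inr (true, u, w))
  | true, _, _ => rfl
  | false, u, w => orbitMk_apply h1 (.inr (true, u, w))

theorem orbitMk_addRung_vertex_false (h1 : (H.addRung x false).theta 1 ∈ fs')
    (h2 : (H.addRung x false).theta 2 ∈ fs') (c u w : Bool) : orbitMk fs' (.inr (c, u, w)) =
      orbitMk fs' (if w then .inr (true, true, true) else .inl x) := by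
  have hside := orbitMk_addRung_inr_eq_center false h1
  have hstart : orbitMk fs' (.inl x) = orbitMk fs' (.inr (true, false, false)) :=
    orbitMk_apply h2 (.inr (true, false, false))
  have hleaf (w : Bool) :
      orbitMk fs' (.inr (true, false, w)) = orbitMk fs' (.inr (true, true, w)) :=
    (hside _ _ _).symm.trans ((orbitMk_apply h2 (.inr (false, true, w))).trans (hside _ _ _))
  rw [hside]
  cases u <;> cases w <;> simp [hstart, hleaf]

theorem orbitMk_addRung_vertex_true (h1 : (H.addRung x true).theta 1 ∈ fs')
    (h2 : (H.addRung x true).theta 2 ∈ fs') (c u w : Bool) :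
    orbitMk fs' (.inr (c, u, w)) = orbitMk fs' (.inl x) := by
  have hside := orbitMk_addRung_inr_eq_center true h1
  have hstart : orbitMk fs' (.inl x) = orbitMk fs' (.inr (true, false, false)) :=
    orbitMk_apply h2 (.inr (true, false, false))
  have hleaf (u : Bool) :
      orbitMk fs' (.inr (true, u, true)) = orbitMk fs' (.inr (true, u, false)) :=
    (hside _ _ _).symm.trans ((orbitMk_apply h2 (.inr (false, u, false))).trans (hside _ _ _))
  have hmid : orbitMk fs' (.inr (true, true, true)) = orbitMk fs' (.inr (true, false, true)) :=
    orbitMk_apply h2 (.inr (true, false, true))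
  rw [hside, hstart]
  cases u <;> cases w <;> simp [← hleaf, hmid]

theorem orbitMk_addRung_face_false (h0 : (H.addRung x false).theta 0 ∈ fs')
    (h1 : (H.addRung x false).theta 1 ∈ fs') (c u w : Bool) :
    orbitMk fs' (.inr (c, u, w)) = orbitMk fs' (.inr (true, u, true)) := by
  rw [orbitMk_addRung_inr_eq_center false h1]
  cases w
  · exact (orbitMk_apply h0 (.inr (true, u, false))).symm
  · rfl

theorem orbitMk_addRung_face_true (h0 : (H.addRung x true).theta 0 ∈ fs')
    (h1 : (H.addRung x true).theta 1 ∈ fs') (c u w : Bool) :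
    orbitMk fs' (.inr (c, u, w)) = orbitMk fs' (.inr (true, true, true)) := by
  have hside := orbitMk_addRung_inr_eq_center true h1
  have hcenter (u : Bool) :
      orbitMk fs' (.inr (true, u, false)) = orbitMk fs' (.inr (true, u, true)) :=
    orbitMk_apply h0 (.inr (true, u, true))
  have hleaf : orbitMk fs' (.inr (true, false, true)) = orbitMk fs' (.inr (true, true, true)) :=
    (hside _ _ _).symm.trans ((orbitMk_apply h0 (.inr (false, true, true))).trans (hside _ _ _))
  rw [hside]
  cases u <;> cases w <;> simp [hcenter, hleaf]

theorem orbitMk_addRung_center (h0 : (H.addRung x t).theta 0 ∈ fs')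
    (h2 : (H.addRung x t).theta 2 ∈ fs') (u w : Bool) :
    orbitMk fs' (.inr (true, u, w)) = orbitMk fs' (.inl x) := by
  have hstart : orbitMk fs' (.inl x) = orbitMk fs' (.inr (true, false, false)) :=
    orbitMk_apply h2 (.inr (true, false, false))
  have hstep (u : Bool) :
      orbitMk fs' (.inr (true, u, true)) = orbitMk fs' (.inr (true, u, false)) :=
    orbitMk_apply h0 (.inr (true, u, false))
  have hmid : orbitMk fs' (.inr (true, true, true)) = orbitMk fs' (.inr (true, false, true)) :=
    orbitMk_apply h2 (.inr (true, false, true))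
  rw [hstart]
  cases u <;> cases w <;> simp [← hstep, hmid]

theorem orbitMk_addRung_leaf (h0 : (H.addRung x t).theta 0 ∈ fs')
    (h2 : (H.addRung x t).theta 2 ∈ fs') (u w : Bool) :
    orbitMk fs' (.inr (false, u, w)) = orbitMk fs' (.inr (false, true, true)) := by
  have hu (w : Bool) : orbitMk fs' (.inr (false, false, w)) = orbitMk fs' (.inr (false, true, w)) :=
    match t with
    | true => orbitMk_apply h0 (.inr (false, true, w))
    | false => orbitMk_apply h2 (.inr (false, true, w))
  have hw : orbitMk fs' (.inr (false, true, false)) = orbitMk fs' (.inr (false, true, true)) :=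
    match t with
    | true => orbitMk_apply h2 (.inr (false, true, true))
    | false => orbitMk_apply h0 (.inr (false, true, true))
  cases u <;> cases w <;> simp [hu, hw]

section Counts

variable [Finite F]

theorem v_addRung_false (hx : H.theta 2 (H.theta 2 x) = x) : (H.addRung x false).v = H.v + 1 := by
  have hnew := orbitMk_addRung_vertex_false (H := H) (x := x)
    (fs' := {(H.addRung x false).theta 1, (H.addRung x false).theta 2}) (by simp) (by simp)
  refine (orbitCount_sum_eq_add_card (fs := {H.theta 1, H.theta 2}) (K := Unit) x
    (fun r => if r.2.2 then some () else none) (fun _ => (true, true, true)) (fun _ => rfl)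
    ?_ ?_ ?_).trans (by rw [Nat.card_unique, v])
  · rintro f (rfl | rfl)
    · exact orbitLabel_addRung_theta_one _ (by simp) (fun r => if r.2 then some () else none)
    · exact orbitLabel_addRung_theta_two _ (by simp) _ (by simp) (by simp) (by simp)
  · rintro f (rfl | rfl)
    · exact fun y => orbitMk_apply (f := (H.addRung x false).theta 1) (by simp) (.inl y)
    · refine orbitMk_addRung_inl_theta_two false (by simp) hx ?_
      rw [hnew, hnew]
  · rintro ⟨c, u, w⟩
    rw [hnew]
    cases w <;> rfl

theorem v_addRung_true (hx : H.theta 2 (H.theta 2 x) = x) : (H.addRung x true).v = H.v := by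
  have hnew := orbitMk_addRung_vertex_true (H := H) (x := x)
    (fs' := {(H.addRung x true).theta 1, (H.addRung x true).theta 2}) (by simp) (by simp)
  refine (orbitCount_sum_eq_add_card (fs := {H.theta 1, H.theta 2}) (K := Empty) x
    (fun _ => none) Empty.elim (fun k => k.elim) ?_ ?_ ?_).trans
    (by rw [Nat.card_of_isEmpty, v, add_zero])
  · rintro f (rfl | rfl)
    · exact orbitLabel_addRung_theta_one _ (by simp) (fun _ => none)
    · exact orbitLabel_addRung_theta_two _ (by simp) _ (by simp) (by simp) (by simp)
  · rintro f (rfl | rfl)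
    · exact fun y => orbitMk_apply (f := (H.addRung x true).theta 1) (by simp) (.inl y)
    · refine orbitMk_addRung_inl_theta_two true (by simp) hx ?_
      rw [hnew, hnew]
  · rintro ⟨c, u, w⟩
    exact (hnew c u w).symm

theorem f_addRung_false : (H.addRung x false).f = H.f + 2 := by
  have hnew := orbitMk_addRung_face_false (H := H) (x := x)
    (fs' := {(H.addRung x false).theta 0, (H.addRung x false).theta 1}) (by simp) (by simp)
  refine (orbitCount_sum_eq_add_card (fs := {H.theta 0, H.theta 1}) (K := Bool) x
    (fun r => some r.2.1) (fun u => (true, u, true)) (fun _ => rfl) ?_ ?_ ?_).trans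
    (by rw [Nat.card_eq_fintype_card, Fintype.card_bool, f])
  · rintro f (rfl | rfl)
    · exact orbitLabel_addRung_theta_zero _ (by simp) _ (by simp)
    · exact orbitLabel_addRung_theta_one _ (by simp) (fun r => some r.1)
  · rintro f (rfl | rfl) y
    · exact orbitMk_apply (f := (H.addRung x false).theta 0) (by simp) (.inl y)
    · exact orbitMk_apply (f := (H.addRung x false).theta 1) (by simp) (.inl y)
  · rintro ⟨c, u, w⟩
    exact (hnew c u w).symm

theorem f_addRung_true : (H.addRung x true).f = H.f + 1 := by
  have hnew := orbitMk_addRung_face_true (H := H) (x := x)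
    (fs' := {(H.addRung x true).theta 0, (H.addRung x true).theta 1}) (by simp) (by simp)
  refine (orbitCount_sum_eq_add_card (fs := {H.theta 0, H.theta 1}) (K := Unit) x
    (fun _ => some ()) (fun _ => (true, true, true)) (fun _ => rfl) ?_ ?_ ?_).trans
    (by rw [Nat.card_unique, f])
  · rintro f (rfl | rfl)
    · exact orbitLabel_addRung_theta_zero _ (by simp) _ (by simp)
    · exact orbitLabel_addRung_theta_one _ (by simp) (fun _ => some ())
  · rintro f (rfl | rfl) y
    · exact orbitMk_apply (f := (H.addRung x true).theta 0) (by simp) (.inl y)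
    · exact orbitMk_apply (f := (H.addRung x true).theta 1) (by simp) (.inl y)
  · rintro ⟨c, u, w⟩
    exact (hnew c u w).symm

theorem e_addRung (hx : H.theta 2 (H.theta 2 x) = x) : (H.addRung x t).e = H.e + 1 := by
  have hcenter := orbitMk_addRung_center (H := H) (x := x) t
    (fs' := {(H.addRung x t).theta 0, (H.addRung x t).theta 2}) (by simp) (by simp)
  have hleaf := orbitMk_addRung_leaf (H := H) (x := x) t
    (fs' := {(H.addRung x t).theta 0, (H.addRung x t).theta 2}) (by simp) (by simp)
  refine (orbitCount_sum_eq_add_card (fs := {H.theta 0, H.theta 2}) (K := Unit) x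
    (fun r => if r.1 then none else some ()) (fun _ => (false, true, true)) (fun _ => rfl)
    ?_ ?_ ?_).trans (by rw [Nat.card_unique, e])
  · rintro f (rfl | rfl)
    · exact orbitLabel_addRung_theta_zero _ (by simp) _ (by grind)
    · exact orbitLabel_addRung_theta_two _ (by simp) _ (by simp) (by simp) (by grind)
  · rintro f (rfl | rfl)
    · exact fun y => orbitMk_apply (f := (H.addRung x t).theta 0) (by simp) (.inl y)
    · refine orbitMk_addRung_inl_theta_two t (by simp) hx ?_
      rw [hcenter, hcenter]
  · rintro ⟨_ | _, u, w⟩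
    · exact (hleaf u w).symm
    · exact (hcenter u w).symm

theorem c_addRung (hx : H.theta 2 (H.theta 2 x) = x) : (H.addRung x t).c = H.c := by
  have hcenter := orbitMk_addRung_center (H := H) (x := x) t
    (fs' := {(H.addRung x t).theta 0, (H.addRung x t).theta 1, (H.addRung x t).theta 2})
    (by simp) (by simp)
  have hside := orbitMk_addRung_inr_eq_center (H := H) (x := x) t
    (fs' := {(H.addRung x t).theta 0, (H.addRung x t).theta 1, (H.addRung x t).theta 2}) (by simp)
  refine (orbitCount_sum_eq_add_card (fs := {H.theta 0, H.theta 1, H.theta 2}) (K := Empty) x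
    (fun _ => none) Empty.elim (fun k => k.elim) ?_ ?_ ?_).trans
    (by rw [Nat.card_of_isEmpty, c, add_zero])
  · rintro f (rfl | rfl | rfl)
    · exact orbitLabel_addRung_theta_zero _ (by simp) _ (by simp)
    · exact orbitLabel_addRung_theta_one _ (by simp) (fun _ => none)
    · exact orbitLabel_addRung_theta_two _ (by simp) _ (by simp) (by simp) (by simp)
  · rintro f (rfl | rfl | rfl)
    · exact fun y => orbitMk_apply (f := (H.addRung x t).theta 0) (by simp) (.inl y)
    · exact fun y => orbitMk_apply (f := (H.addRung x t).theta 1) (by simp) (.inl y)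
    · refine orbitMk_addRung_inl_theta_two t (by simp) hx ?_
      rw [hcenter, hcenter]
  · rintro ⟨c, u, w⟩
    rw [hside, hcenter]
    rfl

theorem eulerGenus_addRung (hx : H.theta 2 (H.theta 2 x) = x) :
    (H.addRung x t).eulerGenus = H.eulerGenus + if t then 2 else 0 := by
  have hcard : Nat.card (F ⊕ Bool × Bool × Bool) = Nat.card F + 8 := by
    simp [Nat.card_sum]
  have he := e_addRung t hx
  have hc := c_addRung t hx
  rw [eulerGenus, eulerGenus, chi, chi, hcard, he, hc]
  cases t
  · rw [v_addRung_false hx, f_addRung_false, if_neg Bool.false_ne_true]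
    omega
  · rw [v_addRung_true hx, f_addRung_true, if_pos rfl]
    omega

end Counts

section RungDual

variable {S : Set F} {p : Bool}

/-- The set of flags of `H.addRung x t` which continues a union `S` of hyperedges of `H` along the
extended hyperedge of `x`, and contains the new hyperedge iff `p` is true. -/
def rungExtend (x : F) (S : Set F) (p : Bool) : Set (F ⊕ Bool × Bool × Bool) :=
  {z | Sum.elim (· ∈ S) (fun r => if r.1 then x ∈ S else p) z}

@[simp]
theorem inl_mem_rungExtend {y : F} : .inl y ∈ rungExtend x S p ↔ y ∈ S :=
  Iff.rfl

@[simp]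
theorem inr_true_mem_rungExtend {r : Bool × Bool} : .inr (true, r) ∈ rungExtend x S p ↔ x ∈ S :=
  Iff.rfl

@[simp]
theorem inr_false_mem_rungExtend {r : Bool × Bool} : .inr (false, r) ∈ rungExtend x S p ↔ p :=
  Iff.rfl

theorem compl_rungExtend : (rungExtend x S p)ᶜ = rungExtend x Sᶜ !p := by
  ext (y | ⟨_ | _, r⟩) <;> simp

theorem rungExtend_injective :
    Function.Injective fun Sp : Set F × Bool => rungExtend x Sp.1 Sp.2 := by
  rintro ⟨S, p⟩ ⟨S', p'⟩ h
  refine Prod.ext (Set.ext fun y => ?_) (Bool.eq_iff_iff.2 ?_)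
  · exact Set.ext_iff.1 h (.inl y)
  · exact Set.ext_iff.1 h (.inr (false, true, true))

theorem edgeClosed_rungExtend (hS : H.EdgeClosed S) :
    (H.addRung x t).EdgeClosed (rungExtend x S p) := by
  have hx' := (hS x).2
  rintro (y | ⟨_ | _, u, w⟩)
  · refine ⟨(hS y).1, ?_⟩
    rw [addRung_theta_two_inl]
    split_ifs with hyx hyx'
    · simp [hyx]
    · simp [hyx', hx']
    · exact (hS y).2
  · cases t <;> simp
  · cases u <;> cases w <;> simp [hx']

theorem edgeClosed_addRung_iff (hx : H.theta 2 (H.theta 2 x) = x)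
    {S' : Set (F ⊕ Bool × Bool × Bool)} : (H.addRung x t).EdgeClosed S' ↔
      ∃ S p, H.EdgeClosed S ∧ rungExtend x S p = S' := by
  refine ⟨fun hS' => ?_, fun ⟨S, p, hS, h⟩ => h ▸ edgeClosed_rungExtend t hS⟩
  have hmem {z z'} (h : orbitMk _ z = orbitMk _ z') : z ∈ S' ↔ z' ∈ S' :=
    hS'.mem_iff_of_orbitRel (orbitMk_eq_orbitMk_iff.1 h)
  have hcenter := orbitMk_addRung_center (H := H) (x := x) t
    (fs' := {(H.addRung x t).theta 0, (H.addRung x t).theta 2}) (by simp) (by simp)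
  have hleaf := orbitMk_addRung_leaf (H := H) (x := x) t
    (fs' := {(H.addRung x t).theta 0, (H.addRung x t).theta 2}) (by simp) (by simp)
  refine ⟨Sum.inl ⁻¹' S', decide (.inr (false, true, true) ∈ S'), fun y => ⟨?_, ?_⟩, ?_⟩
  · exact (hS' (.inl y)).1
  · exact hmem (orbitMk_addRung_inl_theta_two t (by simp) hx (by rw [hcenter, hcenter]) y)
  · ext (y | ⟨_ | _, u, w⟩)
    · rfl
    · simp [hmem (hleaf u w)]
    · simp [hmem (hcenter u w)]

theorem pdual_addRung (hxS : x ∉ S) (hxS' : H.theta 2 x ∉ S) :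
    (H.addRung x t).pdual (rungExtend x S p) = (H.pdual S).addRung x (t ^^ p) := by
  have hne {y : F} (hy : y ∈ S) : y ≠ x ∧ y ≠ H.theta 2 x :=
    ⟨ne_of_mem_of_not_mem hy hxS, ne_of_mem_of_not_mem hy hxS'⟩
  refine congrArg mk (funext₂ fun i z => ?_)
  rcases z with y | ⟨_ | _, u, w⟩
  · by_cases hy : y ∈ S
    · fin_cases i <;> simp [pdual, addRung_theta_two_inl, hy, hne hy, hxS]
    · fin_cases i <;> simp [pdual, addRung_theta_two_inl, hy, hxS]
  · cases p <;> cases t <;> fin_cases i <;> simp [pdual]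
  · cases w <;> fin_cases i <;> simp [pdual, hxS]

theorem eulerGenus_pdual_addRung [Finite F] (hx : H.theta 2 (H.theta 2 x) = x)
    (hS : H.EdgeClosed S) : ((H.addRung x t).pdual (rungExtend x S p)).eulerGenus =
      (H.pdual S).eulerGenus + if t ^^ p ^^ decide (x ∈ S) then 2 else 0 := by
  have hout {S : Set F} {p : Bool} (hS : H.EdgeClosed S) (hxS : x ∉ S) :
      ((H.addRung x t).pdual (rungExtend x S p)).eulerGenus =
        (H.pdual S).eulerGenus + if t ^^ p then 2 else 0 := by
    have hxS' : H.theta 2 x ∉ S := hxS ∘ (hS x).2.1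
    rw [pdual_addRung t hxS hxS', eulerGenus_addRung]
    simpa [pdual, hxS, hxS'] using hx
  by_cases hxS : x ∈ S
  · rw [← eulerGenus_pdual_compl, compl_rungExtend, hout hS.compl (by simpa),
      eulerGenus_pdual_compl]
    simp [hxS]
  · simp [hout hS hxS, hxS]

theorem eulerGenus_pdual_addRung_nonneg [Finite F] (hx : H.theta 2 (H.theta 2 x) = x)
    (hH : ∀ S, H.EdgeClosed S → 0 ≤ (H.pdual S).eulerGenus) (S' : Set (F ⊕ Bool × Bool × Bool))
    (hS' : (H.addRung x t).EdgeClosed S') : 0 ≤ ((H.addRung x t).pdual S').eulerGenus := by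
  obtain ⟨S, p, hS, rfl⟩ := (edgeClosed_addRung_iff t hx).1 hS'
  rw [eulerGenus_pdual_addRung t hx hS]
  have hgenus := hH S hS
  split_ifs <;> omega

open Polynomial in
theorem pdPoly_addRung [Fintype F] (hx : H.theta 2 (H.theta 2 x) = x)
    (hH : ∀ S, H.EdgeClosed S → 0 ≤ (H.pdual S).eulerGenus) :
    (H.addRung x t).pdPoly = (1 + X ^ 2) * H.pdPoly := by
  have hpair (S : Set F) (hS : H.EdgeClosed S) :
      ∑ p, (X : ℕ[X]) ^ ((H.addRung x t).pdual (rungExtend x S p)).eulerGenus.toNat =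
        (1 + X ^ 2) * X ^ (H.pdual S).eulerGenus.toNat := by
    have hpow : (X : ℕ[X]) ^ ((H.pdual S).eulerGenus + 2).toNat =
        X ^ 2 * X ^ (H.pdual S).eulerGenus.toNat := by
      rw [← pow_add, add_comm 2]
      exact congrArg (X ^ ·) (Int.toNat_add_nat (hH S hS) 2)
    simp only [Fintype.sum_bool, eulerGenus_pdual_addRung t hx hS]
    cases t <;> by_cases hxS : x ∈ S <;> simp [hxS, hpow, one_add_mul, add_comm (X ^ 2 * _)]
  have himage : ({S' | (H.addRung x t).EdgeClosed S'} : Finset _) =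
      Finset.image (fun Sp => rungExtend x Sp.1 Sp.2)
        (({S | H.EdgeClosed S} : Finset (Set F)) ×ˢ .univ) := by
    ext S'
    simp [edgeClosed_addRung_iff t hx]
  rw [pdPoly_eq_sum_edgeClosed, pdPoly_eq_sum_edgeClosed, himage,
    Finset.sum_image rungExtend_injective.injOn, Finset.sum_product, Finset.mul_sum]
  exact Finset.sum_congr rfl fun S hS => hpair S (Finset.mem_filter.1 hS).2

end RungDual

end Rung

section Ladder

/-- The hypermap on two flags, with a single vertex, hyperedge and face, from which the
hyper-ladder is grown. -/
def unitMap : PreHypermap Bool where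
  theta _ := not

theorem isHypermap_unitMap : unitMap.IsHypermap :=
  fun _ => ⟨Bool.not_not, Bool.not_ne_self⟩

theorem orbitCount_bool_eq_one {fs : Set (Bool → Bool)} (h : not ∈ fs) :
    orbitCount fs = 1 := by
  refine orbitCount_eq_one fun a b => ?_
  obtain rfl | rfl := Bool.eq_or_eq_not a b
  · rfl
  · exact orbitMk_apply h b

theorem c_unitMap : unitMap.c = 1 :=
  orbitCount_bool_eq_one (.inl rfl)

theorem e_unitMap : unitMap.e = 1 :=
  orbitCount_bool_eq_one (.inl rfl)

theorem eulerGenus_unitMap : unitMap.eulerGenus = 0 := by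
  have hv : unitMap.v = 1 := orbitCount_bool_eq_one (.inl rfl)
  have hf : unitMap.f = 1 := orbitCount_bool_eq_one (.inl rfl)
  simp [eulerGenus, chi, hv, hf, c_unitMap, e_unitMap]

theorem pdual_unitMap (S : Set Bool) : unitMap.pdual S = unitMap := by
  simp [pdual, unitMap]

theorem edgeClosed_unitMap_iff {S : Set Bool} : unitMap.EdgeClosed S ↔ S = ∅ ∨ S = Set.univ := by
  refine ⟨fun hS => ?_, ?_⟩
  · have hmem : false ∈ S ↔ true ∈ S := (hS true).1
    by_cases htrue : true ∈ S
    · exact .inr (Set.eq_univ_of_forall (Bool.forall_bool.2 ⟨hmem.2 htrue, htrue⟩))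
    · exact .inl (Set.eq_empty_of_forall_notMem
        (Bool.forall_bool.2 ⟨mt hmem.1 htrue, htrue⟩))
  · rintro (rfl | rfl) <;> simp [EdgeClosed]

theorem pdPoly_unitMap : unitMap.pdPoly = Polynomial.C 2 := by
  have hfilter : ({S | unitMap.EdgeClosed S} : Finset (Set Bool)) = {∅, Set.univ} := by
    ext S
    simp [edgeClosed_unitMap_iff]
  rw [pdPoly_eq_sum_edgeClosed, hfilter, Finset.sum_pair Set.empty_ne_univ]
  simp only [pdual_unitMap, eulerGenus_unitMap]
  norm_num

theorem exists_hyperladder (n : ℕ) : ∃ (F : Type) (_ : Fintype F) (_ : Nonempty F)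
    (H : PreHypermap F), H.IsHypermap ∧ H.Connected ∧ H.e = n + 1 ∧
      (∀ S, H.EdgeClosed S → 0 ≤ (H.pdual S).eulerGenus) ∧
      H.pdPoly = Polynomial.C 2 * (1 + Polynomial.X ^ 2) ^ n := by
  induction n with
  | zero =>
    exact ⟨Bool, inferInstance, inferInstance, unitMap, isHypermap_unitMap, c_unitMap, e_unitMap,
      fun S _ => by rw [pdual_unitMap, eulerGenus_unitMap],
      by rw [pdPoly_unitMap, pow_zero, mul_one]⟩
  | succ n ih =>
    obtain ⟨F, _, ⟨x⟩, H, hH, hconn, he, hnonneg, hpoly⟩ := ih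
    have hx : H.theta 2 (H.theta 2 x) = x := (hH 2).1 x
    refine ⟨F ⊕ Bool × Bool × Bool, inferInstance, inferInstance, H.addRung x false,
      isHypermap_addRung _ hH, (c_addRung _ hx).trans hconn, ?_,
      eulerGenus_pdual_addRung_nonneg _ hx hnonneg, ?_⟩
    · rw [e_addRung _ hx, he]
    · rw [pdPoly_addRung _ hx hnonneg, hpoly]
      ring

end Ladder

end PreHypermap

open PreHypermap in
/-- For every `n ≥ 1` there is a connected hypermap with exactly `n` hyperedges (the
hyper-ladder map) whose partial-dual Euler-genus polynomial is `2 (1 + z²)^(n-1)`. -/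
theorem statement_16 :
    ∀ n : ℕ, 1 ≤ n →
      ∃ (F : Type) (_ : Fintype F) (H : PreHypermap F),
        H.IsHypermap ∧ H.Connected ∧ H.e = n ∧
        H.pdPoly = Polynomial.C 2 * (1 + Polynomial.X ^ 2) ^ (n - 1) := by
  intro n hn
  obtain ⟨m, rfl⟩ := Nat.exists_eq_add_of_le' hn
  obtain ⟨F, hF, _, H, hH, hconn, he, _, hpoly⟩ := exists_hyperladder m
  exact ⟨F, hF, H, hH, hconn, he, hpoly⟩
end

section
/- Let H = (F, θ₀, θ₁, θ₂) be a connected combinatorial hypermap with |F| = 2·(v(H) + e(H) − 1) (i.e. its bipartite incidence graph is a tree). Then H has exactly one face, f(H) = 1, and Euler genus zero, ε(H) = 0. -/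
open Classical

/-!
Functions `F → ZMod 2` that are constant on the orbits of a set of involutions form a subspace
whose dimension is the number of orbits. Let `V`, `E`, `Φ` be the subspaces belonging to
vertices, hyperedges and faces, and `W` the one belonging to `θ₂` alone, so that `2 dim W ≥ |F|`.
Two functions invariant under a common fixed-point-free involution have dot product `0` in
characteristic two, since the summands cancel in pairs. Any two of `V`, `E`, `Φ` share an
involution, and `W` shares `θ₂` with `V` and `E`; hence `V + E` is orthogonal to `Φ + W`. As
`V ∩ E = Φ ∩ W` is the space of functions constant on components, comparing dimensions gives
`(v + e - c) + (f + |F|/2 - c) ≤ |F|`, that is, `0 ≤ ε(H)`. If `|F| = 2 (v + e - c)`, then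
`ε(H) = c - f ≤ 0`, and equality holds throughout.
-/

theorem finrank_add_finrank_le_card_of_dotProduct_eq_zero {K ι : Type*} [Field K] [Fintype ι]
    {U W : Submodule K (ι → K)} (h : ∀ u ∈ U, ∀ w ∈ W, u ⬝ᵥ w = 0) :
    Module.finrank K U + Module.finrank K W ≤ Fintype.card ι := by
  have hle : U.map (dotProductEquiv K ι).toLinearMap ≤ W.dualAnnihilator := by
    rintro _ ⟨u, hu, rfl⟩
    exact (Submodule.mem_dualAnnihilator _).mpr (h u hu)
  calc Module.finrank K U + Module.finrank K W
      = Module.finrank K (U.map (dotProductEquiv K ι).toLinearMap) + Module.finrank K W := by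
        rw [LinearEquiv.finrank_map_eq]
    _ ≤ Module.finrank K W.dualAnnihilator + Module.finrank K W := by
        gcongr
        exact Submodule.finrank_mono hle
    _ = Fintype.card ι := by
        rw [add_comm, Subspace.finrank_add_finrank_dualAnnihilator_eq,
          Module.finrank_fintype_fun_eq_card]

theorem dotProduct_eq_zero_of_comp_eq {R ι : Type*} [CommRing R] [CharP R 2] [Fintype ι]
    {t : ι → ι} (ht : Function.Involutive t) (hne : ∀ x, t x ≠ x) {g h : ι → R}
    (hg : g ∘ t = g) (hh : h ∘ t = h) : g ⬝ᵥ h = 0 := by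
  refine Finset.sum_involution (fun x _ => t x) (fun x _ => ?_) (fun x _ _ => hne x)
    (fun _ _ => Finset.mem_univ _) (fun x _ => ht x)
  rw [show g (t x) = g x from congrFun hg x, show h (t x) = h x from congrFun hh x,
    CharTwo.add_self_eq_zero]

namespace PreHypermap

section InvariantFunctions

variable {F : Type*} (R : Type*)

/-- The functions `F → R` invariant under every map in `fs`, equivalently those constant on the
orbits of `fs`. Their dimension over a field counts these orbits. -/
def invariantFunctions [Semiring R] (fs : Set (F → F)) : Submodule R (F → R) where
  carrier := {g | ∀ f ∈ fs, g ∘ f = g}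
  add_mem' ha hb f hf := congrArg₂ (· + ·) (ha f hf) (hb f hf)
  zero_mem' _ _ := rfl
  smul_mem' r _ ha f hf := congrArg (r • ·) (ha f hf)

theorem invariantFunctions_anti [Semiring R] {fs gs : Set (F → F)} (h : fs ⊆ gs) :
    invariantFunctions R gs ≤ invariantFunctions R fs :=
  fun _ hg f hf => hg f (h hf)

theorem invariantFunctions_union [Semiring R] (fs gs : Set (F → F)) :
    invariantFunctions R (fs ∪ gs) = invariantFunctions R fs ⊓ invariantFunctions R gs :=
  le_antisymm
    (le_inf (invariantFunctions_anti R Set.subset_union_left)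
      (invariantFunctions_anti R Set.subset_union_right))
    fun _ hg f hf => hf.elim (hg.1 f) (hg.2 f)

theorem range_funLeft_mk_orbitSetoid [Semiring R] (fs : Set (F → F)) :
    LinearMap.range (LinearMap.funLeft R R (Quotient.mk (orbitSetoid fs))) =
      invariantFunctions R fs := by
  apply le_antisymm
  · rintro _ ⟨h, rfl⟩ f hf
    funext x
    exact congrArg h (Quotient.sound (.symm _ _ (.rel _ _ ⟨f, hf, rfl⟩)))
  · intro g hg
    have hle : orbitSetoid fs ≤ Setoid.ker g :=
      Setoid.eqvGen_le fun x _ ⟨f, hf, hxy⟩ => hxy ▸ (congrFun (hg f hf) x).symm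
    exact ⟨Quotient.lift g fun _ _ hxy => hle hxy, rfl⟩

theorem finrank_invariantFunctions [Semiring R] [StrongRankCondition R] [Finite F]
    (fs : Set (F → F)) : Module.finrank R (invariantFunctions R fs) = orbitCount fs := by
  have := Fintype.ofFinite (Quotient (orbitSetoid fs))
  rw [← range_funLeft_mk_orbitSetoid, LinearMap.finrank_range_of_inj
    (LinearMap.funLeft_injective_of_surjective _ _ _ Quotient.mk_surjective),
    Module.finrank_fintype_fun_eq_card, orbitCount, Nat.card_eq_fintype_card]

theorem finrank_sup_invariantFunctions_add_orbitCount_union [Field R] [Finite F]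
    (fs gs : Set (F → F)) :
    Module.finrank R ↥(invariantFunctions R fs ⊔ invariantFunctions R gs) + orbitCount (fs ∪ gs) =
      orbitCount fs + orbitCount gs := by
  rw [← finrank_invariantFunctions R (fs ∪ gs), ← finrank_invariantFunctions R fs,
    ← finrank_invariantFunctions R gs, invariantFunctions_union]
  exact Submodule.finrank_sup_add_finrank_inf_eq _ _

variable {R}

theorem dotProduct_eq_zero_of_mem_invariantFunctions [CommRing R] [CharP R 2] [Fintype F]
    {t : F → F} (ht : Function.Involutive t) (hne : ∀ x, t x ≠ x) {fs gs : Set (F → F)}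
    (hfs : t ∈ fs) (hgs : t ∈ gs) {g h : F → R} (hg : g ∈ invariantFunctions R fs)
    (hh : h ∈ invariantFunctions R gs) : g ⬝ᵥ h = 0 :=
  dotProduct_eq_zero_of_comp_eq ht hne (hg t hfs) (hh t hgs)

end InvariantFunctions

section OrbitCount

variable {F : Type*} [Finite F]

theorem orbitCount_anti {fs gs : Set (F → F)} (h : fs ⊆ gs) : orbitCount gs ≤ orbitCount fs := by
  simpa only [finrank_invariantFunctions] using
    Submodule.finrank_mono (invariantFunctions_anti (ZMod 2) h)

-- In characteristic two both the kernel and the range of `g ↦ g ∘ t + g` are `t`-invariant.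
theorem card_le_two_mul_orbitCount_singleton {t : F → F} (ht : Function.Involutive t) :
    Nat.card F ≤ 2 * orbitCount {t} := by
  have := Fintype.ofFinite F
  let D : (F → ZMod 2) →ₗ[ZMod 2] (F → ZMod 2) := LinearMap.funLeft (ZMod 2) (ZMod 2) t + .id
  have hrange : LinearMap.range D ≤ invariantFunctions (ZMod 2) {t} := by
    rintro _ ⟨g, rfl⟩ t rfl
    funext x
    change g (t (t x)) + g (t x) = g (t x) + g x
    rw [ht x, add_comm]
  have hker : LinearMap.ker D ≤ invariantFunctions (ZMod 2) {t} := by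
    rintro g hg _ rfl
    exact funext fun x => CharTwo.add_eq_zero.mp (congrFun hg x)
  calc Nat.card F
      = Module.finrank (ZMod 2) (LinearMap.range D) +
          Module.finrank (ZMod 2) (LinearMap.ker D) := by
        rw [LinearMap.finrank_range_add_finrank_ker, Module.finrank_fintype_fun_eq_card,
          Nat.card_eq_fintype_card]
    _ ≤ orbitCount {t} + orbitCount {t} := by
        rw [← finrank_invariantFunctions (ZMod 2)]
        exact add_le_add (Submodule.finrank_mono hrange) (Submodule.finrank_mono hker)
    _ = 2 * orbitCount {t} := (two_mul _).symm

end OrbitCount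

variable {F : Type*} {H : PreHypermap F}

theorem IsHypermap.dotProduct_eq_zero_of_mem_sup [Fintype F] (hH : H.IsHypermap) {g h : F → ZMod 2}
    (hg : g ∈ invariantFunctions (ZMod 2) {H.theta 1, H.theta 2} ⊔
      invariantFunctions (ZMod 2) {H.theta 0, H.theta 2})
    (hh : h ∈ invariantFunctions (ZMod 2) {H.theta 0, H.theta 1} ⊔
      invariantFunctions (ZMod 2) {H.theta 2}) : g ⬝ᵥ h = 0 := by
  have orthogonal (i : Fin 3) {fs gs : Set (F → F)} (hfs : H.theta i ∈ fs) (hgs : H.theta i ∈ gs)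
      {a b : F → ZMod 2} (ha : a ∈ invariantFunctions (ZMod 2) fs)
      (hb : b ∈ invariantFunctions (ZMod 2) gs) : a ⬝ᵥ b = 0 :=
    dotProduct_eq_zero_of_mem_invariantFunctions (hH i).1 (hH i).2 hfs hgs ha hb
  obtain ⟨a, ha, b, hb, rfl⟩ := Submodule.mem_sup.mp hg
  obtain ⟨p, hp, q, hq, rfl⟩ := Submodule.mem_sup.mp hh
  rw [add_dotProduct, dotProduct_add, dotProduct_add,
    orthogonal 1 (by simp) (by simp) ha hp, orthogonal 2 (by simp) (by simp) ha hq,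
    orthogonal 0 (by simp) (by simp) hb hp, orthogonal 2 (by simp) (by simp) hb hq]
  simp only [add_zero]

variable [Finite F]

theorem IsHypermap.v_add_e_add_f_add_orbitCount_le (hH : H.IsHypermap) :
    H.v + H.e + H.f + orbitCount {H.theta 2} ≤ Nat.card F + 2 * H.c := by
  have := Fintype.ofFinite F
  have hve := finrank_sup_invariantFunctions_add_orbitCount_union (ZMod 2)
    {H.theta 1, H.theta 2} {H.theta 0, H.theta 2}
  have hft := finrank_sup_invariantFunctions_add_orbitCount_union (ZMod 2)
    {H.theta 0, H.theta 1} {H.theta 2}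
  have hle := finrank_add_finrank_le_card_of_dotProduct_eq_zero
    fun g hg h hh => hH.dotProduct_eq_zero_of_mem_sup (g := g) (h := h) hg hh
  rw [show ({H.theta 1, H.theta 2} ∪ {H.theta 0, H.theta 2} : Set (F → F)) =
    {H.theta 0, H.theta 1, H.theta 2} by grind] at hve
  rw [show ({H.theta 0, H.theta 1} ∪ {H.theta 2} : Set (F → F)) =
    {H.theta 0, H.theta 1, H.theta 2} by grind] at hft
  rw [Nat.card_eq_fintype_card]
  unfold v e f c
  omega

theorem IsHypermap.eulerGenus_nonneg (hH : H.IsHypermap) : 0 ≤ H.eulerGenus := by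
  have hcount := hH.v_add_e_add_f_add_orbitCount_le
  have hcard := card_le_two_mul_orbitCount_singleton (hH 2).1
  unfold eulerGenus chi
  omega

theorem c_le_f (H : PreHypermap F) : H.c ≤ H.f :=
  orbitCount_anti (by grind)

end PreHypermap

theorem statement_19_general {F : Type*} [Finite F] (H : PreHypermap F) (hH : H.IsHypermap)
    (hforest : (Nat.card F : ℤ) = 2 * ((H.v : ℤ) + (H.e : ℤ) - (H.c : ℤ))) :
    H.f = H.c ∧ H.eulerGenus = 0 := by
  have hgenus : H.eulerGenus = H.c - H.f := by
    unfold PreHypermap.eulerGenus PreHypermap.chi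
    omega
  have hnonneg := hH.eulerGenus_nonneg
  have hcf := H.c_le_f
  omega

open PreHypermap in
/-- A connected hypermap with `|F| = 2 (v(H) + e(H) - 1)` (i.e. whose bipartite incidence
graph is a tree) has exactly one face and Euler genus zero. -/
theorem statement_19 {F : Type} [Fintype F] (H : PreHypermap F)
    (hH : H.IsHypermap) (hconn : H.Connected)
    (htree : (Nat.card F : ℤ) = 2 * ((H.v : ℤ) + (H.e : ℤ) - 1)) :
    H.f = 1 ∧ H.eulerGenus = 0 := by
  have hc : H.c = 1 := hconn
  simpa only [hc] using statement_19_general H hH (by rwa [hc, Nat.cast_one])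
end
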